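/- Let V = V₀ + V₁ where V₀ ∈ L^∞(ℝ) with ess inf V₀ > 0 and V₁ is a signed Radon measure on ℝ with finite total variation, and suppose u_n → u weakly in H¹(ℝ). Then lim_{n→∞} ∫_ℝ |u_n|² dV₁ = ∫_ℝ |u|² dV₁. -/

import Mathlib

open MeasureTheory Filter Real Topology

/-- The supremum norm `‖u‖_∞` of a (bounded continuous) function `u : ℝ → ℝ`. -/
noncomputable def supNorm (u : ℝ → ℝ) : ℝ := ⨆ x : ℝ, |u x|

/-- `u` is (the continuous representative of) an element of `H¹(ℝ)`:
`u` is continuous, `u ∈ L²(ℝ)`, and there is a weak derivative `u' ∈ L²(ℝ)`,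
i.e. `u x = u 0 + ∫_0^x u'`. -/
def IsH1 (u : ℝ → ℝ) : Prop :=
  Continuous u ∧ MemLp u 2 (volume : Measure ℝ) ∧
    ∃ u' : ℝ → ℝ, MemLp u' 2 (volume : Measure ℝ) ∧
      ∀ x : ℝ, u x = u 0 + ∫ t in (0:ℝ)..x, u' t

/-- The Dirichlet energy `∫_ℝ |u'(x)|² dx`.  (For `u ∈ H¹(ℝ)` the classical
derivative `deriv u` exists a.e. and coincides a.e. with the weak derivative.) -/
noncomputable def energy (u : ℝ → ℝ) : ℝ := ∫ x : ℝ, (deriv u x) ^ 2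

/-- Integral of `f` against a finite signed Radon measure `μ`, via its Jordan
decomposition `μ = μ₊ - μ₋`. -/
noncomputable def sMeasInt (μ : SignedMeasure ℝ) (f : ℝ → ℝ) : ℝ :=
  (∫ x, f x ∂μ.toJordanDecomposition.posPart) -
    (∫ x, f x ∂μ.toJordanDecomposition.negPart)

/-- `I(u;V)` for a generalized potential `V = V₀ + V₁` with `V₀ ∈ L^∞(ℝ)` and
`V₁` a finite signed Radon measure:
`I(u;V) = ∫_ℝ (|u'|² + V₀|u|²) dx + ∫_ℝ |u|² dV₁`. -/
noncomputable def Itot (V₀ : ℝ → ℝ) (V₁ : SignedMeasure ℝ) (u : ℝ → ℝ) : ℝ :=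
  (∫ x : ℝ, ((deriv u x) ^ 2 + V₀ x * (u x) ^ 2)) + sMeasInt V₁ (fun x => (u x) ^ 2)

/-- The `H¹(ℝ)` inner product `(u,v)_{H¹} = ∫_ℝ (uv + u'v') dx`. -/
noncomputable def h1Inner (u v : ℝ → ℝ) : ℝ :=
  ∫ x : ℝ, (u x * v x + deriv u x * deriv v x)

/-- `u_n → u` weakly in `H¹(ℝ)`: each `u_n` and `u` lie in `H¹(ℝ)` and
`(u_n, v)_{H¹} → (u, v)_{H¹}` for every `v ∈ H¹(ℝ)`. -/
def WeakH1Tendsto (un : ℕ → ℝ → ℝ) (u : ℝ → ℝ) : Prop :=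
  (∀ n, IsH1 (un n)) ∧ IsH1 u ∧
    ∀ v : ℝ → ℝ, IsH1 v →
      Filter.Tendsto (fun n => h1Inner (un n) v) Filter.atTop (𝓝 (h1Inner u v))

/-!
Integrating `(u v)' = u' v + u v'` over the line shows that `u ↦ u + u'` preserves inner products
from `H¹(ℝ)` to `L²(ℝ)`. It is onto: `v(x) = ∫_{-∞}^x exp (t - x) f(t) dt` solves `v + v' = f`.
Hence weak convergence in `H¹` becomes weak convergence of `u_n + u_n'` in `L²`, where the same
formula expresses the value `u_n(x)` as the inner product with a kernel of norm at most one.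
Testing against this kernel gives pointwise convergence, Banach–Steinhaus gives a uniform bound on
`u_n`, and dominated convergence applies to each part of the Jordan decomposition of `V₁`.
-/

/-- `u` is the continuous representative of a function with weak derivative `u'`: `u'` is locally
integrable and the fundamental theorem of calculus holds on every interval. For real-valued `u` this
is local absolute continuity, with `u'` equal to `deriv u` almost everywhere. -/
structure HasWeakDeriv {E : Type*} [NormedAddCommGroup E] [NormedSpace ℝ E] (u u' : ℝ → E) :
    Prop where
  locallyIntegrable : LocallyIntegrable u' volume
  integral_eq_sub : ∀ a b, ∫ t in a..b, u' t = u b - u a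

namespace HasWeakDeriv

section NormedSpace

variable {E : Type*} [NormedAddCommGroup E] [NormedSpace ℝ E] {u u' : ℝ → E}

lemma intervalIntegrable (h : HasWeakDeriv u u') (a b : ℝ) :
    IntervalIntegrable u' volume a b :=
  (h.locallyIntegrable.integrableOn_isCompact isCompact_uIcc).intervalIntegrable

lemma of_eq_add_integral {c : ℝ} (hu' : LocallyIntegrable u' volume)
    (hu : ∀ x, u x = u c + ∫ t in c..x, u' t) : HasWeakDeriv u u' where
  locallyIntegrable := hu'
  integral_eq_sub a b := by
    have hint (x y : ℝ) : IntervalIntegrable u' volume x y :=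
      (hu'.integrableOn_isCompact isCompact_uIcc).intervalIntegrable
    rw [hu a, hu b, add_sub_add_left_eq_sub,
      intervalIntegral.integral_interval_sub_left (hint c b) (hint c a)]

lemma eq_add_integral (h : HasWeakDeriv u u') (c x : ℝ) : u x = u c + ∫ t in c..x, u' t := by
  rw [h.integral_eq_sub, add_sub_cancel]

lemma congr_ae {w : ℝ → E} (h : HasWeakDeriv u u') (hw : u' =ᵐ[volume] w) :
    HasWeakDeriv u w where
  locallyIntegrable := h.locallyIntegrable.congr hw
  integral_eq_sub a b := by
    rw [← h.integral_eq_sub]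
    refine intervalIntegral.integral_congr_ae ?_
    filter_upwards [hw] with t ht _ using ht.symm

lemma of_hasDerivAt [CompleteSpace E] (h : ∀ x, HasDerivAt u (u' x) x) (hu' : Continuous u') :
    HasWeakDeriv u u' where
  locallyIntegrable := hu'.locallyIntegrable
  integral_eq_sub a b := intervalIntegral.integral_eq_sub_of_hasDerivAt (fun x _ => h x)
    (hu'.intervalIntegrable a b)

lemma setIntegral_Iic (h : ∀ x, IntegrableOn u' (Set.Iic x)) :
    HasWeakDeriv (fun x => ∫ t in Set.Iic x, u' t) u' where
  locallyIntegrable x := ⟨Set.Iic (x + 1), Iic_mem_nhds (lt_add_one x), h _⟩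
  integral_eq_sub a b := (intervalIntegral.integral_Iic_sub_Iic (h a) (h b)).symm

lemma continuous (h : HasWeakDeriv u u') : Continuous u := by
  rw [show u = fun x => u 0 + ∫ t in (0 : ℝ)..x, u' t from funext (h.eq_add_integral 0)]
  exact continuous_const.add (intervalIntegral.continuous_primitive h.intervalIntegrable 0)

lemma deriv_ae_eq [CompleteSpace E] (h : HasWeakDeriv u u') : deriv u =ᵐ[volume] u' := by
  rw [show u = fun x => u 0 + ∫ t in (0 : ℝ)..x, u' t from funext (h.eq_add_integral 0)]
  filter_upwards [_root_.LocallyIntegrable.ae_hasDerivAt_integral h.locallyIntegrable] with x hx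
  exact ((hx 0).const_add (u 0)).deriv

lemma tendsto_atTop_zero (h : HasWeakDeriv u u') {a : ℝ} (hu : IntegrableOn u (Set.Ioi a))
    (hu' : IntegrableOn u' (Set.Ioi a)) : Tendsto u atTop (𝓝 0) := by
  have hlim : Tendsto u atTop (𝓝 (u a + ∫ t in Set.Ioi a, u' t)) :=
    ((intervalIntegral_tendsto_integral_Ioi a hu' tendsto_id).const_add (u a)).congr fun x =>
      (h.eq_add_integral a x).symm
  have htop : ∀ s ∈ (atTop : Filter ℝ), volume s = ⊤ := fun s hs => by
    obtain ⟨b, hb⟩ := mem_atTop_sets.1 hs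
    exact measure_mono_top hb volume_Ici
  rwa [IntegrableAtFilter.eq_zero_of_tendsto ⟨_, Ioi_mem_atTop a, hu⟩ htop hlim] at hlim

lemma tendsto_atBot_zero (h : HasWeakDeriv u u') {a : ℝ} (hu : IntegrableOn u (Set.Iic a))
    (hu' : IntegrableOn u' (Set.Iic a)) : Tendsto u atBot (𝓝 0) := by
  have hlim : Tendsto u atBot (𝓝 (u a - ∫ t in Set.Iic a, u' t)) :=
    ((intervalIntegral_tendsto_integral_Iic a hu' tendsto_id).const_sub (u a)).congr fun x => by
      rw [h.integral_eq_sub, id, sub_sub_cancel]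
  have htop : ∀ s ∈ (atBot : Filter ℝ), volume s = ⊤ := fun s hs => by
    obtain ⟨b, hb⟩ := mem_atBot_sets.1 hs
    exact measure_mono_top hb volume_Iic
  rwa [IntegrableAtFilter.eq_zero_of_tendsto ⟨_, Iic_mem_atBot a, hu⟩ htop hlim] at hlim

lemma integral_eq_zero (h : HasWeakDeriv u u') (hu : Integrable u) (hu' : Integrable u') :
    ∫ t, u' t = 0 := by
  have hlim : Tendsto (fun x => u x - u (-x)) atTop (𝓝 (∫ t, u' t)) :=
    (intervalIntegral_tendsto_integral hu' tendsto_neg_atTop_atBot tendsto_id).congr fun x =>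
      h.integral_eq_sub (-x) x
  have hzero : Tendsto (fun x => u x - u (-x)) atTop (𝓝 (0 - 0)) :=
    (h.tendsto_atTop_zero (a := 0) hu.integrableOn hu'.integrableOn).sub
      ((h.tendsto_atBot_zero (a := 0) hu.integrableOn hu'.integrableOn).comp
        tendsto_neg_atTop_atBot)
  rw [tendsto_nhds_unique hlim hzero, sub_zero]

lemma setIntegral_Iic_eq (h : HasWeakDeriv u u') (hu : Tendsto u atBot (𝓝 0)) {x : ℝ}
    (hu' : IntegrableOn u' (Set.Iic x)) : ∫ t in Set.Iic x, u' t = u x := by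
  have hlim : Tendsto (fun a => u x - u a) atBot (𝓝 (∫ t in Set.Iic x, u' t)) :=
    (intervalIntegral_tendsto_integral_Iic x hu' tendsto_id).congr fun a =>
      h.integral_eq_sub a x
  rw [tendsto_nhds_unique hlim (hu.const_sub (u x)), sub_zero]

end NormedSpace

variable {u u' v v' : ℝ → ℝ}

lemma absolutelyContinuousOnInterval (h : HasWeakDeriv u u') (a b : ℝ) :
    AbsolutelyContinuousOnInterval u a b := by
  rw [show u = fun x => u a + ∫ t in a..x, u' t from funext (h.eq_add_integral a)]
  exact (LipschitzWith.const (u a)).lipschitzOnWith.absolutelyContinuousOnInterval.fun_add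
    ((h.intervalIntegrable a b).absolutelyContinuousOnInterval_intervalIntegral Set.left_mem_uIcc)

lemma mul (hu : HasWeakDeriv u u') (hv : HasWeakDeriv v v') :
    HasWeakDeriv (fun x => u x * v x) (fun x => u' x * v x + u x * v' x) where
  locallyIntegrable := (hu.locallyIntegrable.mul_continuous hv.continuous).add
    (hv.locallyIntegrable.continuous_mul hu.continuous)
  integral_eq_sub a b := by
    rw [← (hu.absolutelyContinuousOnInterval a b).integral_deriv_mul_eq_sub
      (hv.absolutelyContinuousOnInterval a b)]
    refine intervalIntegral.integral_congr_ae ?_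
    filter_upwards [hu.deriv_ae_eq, hv.deriv_ae_eq] with t hut hvt _
    rw [hut, hvt]

-- Integrate `(v²)' = 2 v v' ≤ (v + v')² - v²`.
lemma intervalIntegral_sq_le (h : HasWeakDeriv v v') {a b : ℝ} (hab : a ≤ b)
    (hf : IntervalIntegrable (fun t => (v t + v' t) ^ 2) volume a b) :
    ∫ t in a..b, v t ^ 2 ≤ v a ^ 2 + ∫ t in a..b, (v t + v' t) ^ 2 := by
  have hv : IntervalIntegrable (fun t => v t ^ 2) volume a b :=
    (h.continuous.pow 2).intervalIntegrable a b
  have hsq := h.mul h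
  have hmono := intervalIntegral.integral_mono_on hab (hsq.intervalIntegrable a b) (hf.sub hv)
    fun t _ => by nlinarith only [sq_nonneg (v' t)]
  rw [hsq.integral_eq_sub, intervalIntegral.integral_sub hf hv] at hmono
  nlinarith only [hmono, sq_nonneg (v b)]

lemma memLp_two_of_add (h : HasWeakDeriv v v') {C : ℝ} (hC : ∀ x, |v x| ≤ C)
    (hf : MemLp (fun x => v x + v' x) 2) : MemLp v 2 := by
  refine (memLp_two_iff_integrable_sq h.continuous.aestronglyMeasurable).2 ?_
  refine integrable_of_intervalIntegral_norm_bounded (l := atTop) (a := fun n : ℝ => -n)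
    (b := id) (C ^ 2 + ∫ t, (v t + v' t) ^ 2)
    (fun n => (h.continuous.pow 2).integrableOn_Icc.mono_set Set.Ioc_subset_Icc_self)
    tendsto_neg_atTop_atBot tendsto_id ?_
  filter_upwards [eventually_ge_atTop 0] with n hn
  have hle : -n ≤ n := neg_le_self hn
  calc ∫ t in -n..n, ‖v t ^ 2‖
    _ = ∫ t in -n..n, v t ^ 2 := by simp only [norm_pow, norm_eq_abs, sq_abs]
    _ ≤ v (-n) ^ 2 + ∫ t in -n..n, (v t + v' t) ^ 2 :=
      h.intervalIntegral_sq_le hle hf.integrable_sq.intervalIntegrable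
    _ ≤ C ^ 2 + ∫ t, (v t + v' t) ^ 2 := by
      refine add_le_add (sq_le_sq.2 ((hC _).trans (le_abs_self C))) ?_
      rw [intervalIntegral.integral_of_le hle]
      exact setIntegral_le_integral hf.integrable_sq (.of_forall fun _ => sq_nonneg _)

end HasWeakDeriv

namespace IsH1

variable {u v : ℝ → ℝ}

lemma continuous (hu : IsH1 u) : Continuous u := hu.1

lemma memLp (hu : IsH1 u) : MemLp u 2 := hu.2.1

lemma iff_exists_hasWeakDeriv :
    IsH1 u ↔ MemLp u 2 ∧ ∃ u', MemLp u' 2 ∧ HasWeakDeriv u u' := by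
  constructor
  · rintro ⟨-, hu, u', hu', hprim⟩
    exact ⟨hu, u', hu', .of_eq_add_integral (hu'.locallyIntegrable one_le_two) hprim⟩
  · rintro ⟨hu, u', hu', h⟩
    exact ⟨h.continuous, hu, u', hu', h.eq_add_integral 0⟩

lemma hasWeakDeriv_deriv (hu : IsH1 u) : HasWeakDeriv u (deriv u) := by
  obtain ⟨-, u', -, h⟩ := iff_exists_hasWeakDeriv.1 hu
  exact h.congr_ae h.deriv_ae_eq.symm

lemma memLp_deriv (hu : IsH1 u) : MemLp (deriv u) 2 := by
  obtain ⟨-, u', hu', h⟩ := iff_exists_hasWeakDeriv.1 hu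
  exact hu'.ae_eq h.deriv_ae_eq.symm

lemma memLp_add_deriv (hu : IsH1 u) : MemLp (fun x => u x + deriv u x) 2 :=
  hu.memLp.add hu.memLp_deriv

lemma tendsto_atBot_zero (hu : IsH1 u) : Tendsto u atBot (𝓝 0) := by
  have hsq : Tendsto (fun x => u x * u x) atBot (𝓝 0) :=
    (hu.hasWeakDeriv_deriv.mul hu.hasWeakDeriv_deriv).tendsto_atBot_zero (a := 0)
      (hu.memLp.integrable_mul hu.memLp).integrableOn
      ((hu.memLp_deriv.integrable_mul hu.memLp).add
        (hu.memLp.integrable_mul hu.memLp_deriv)).integrableOn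
  refine (tendsto_zero_iff_abs_tendsto_zero u).2 ?_
  simpa only [sqrt_mul_self_eq_abs, sqrt_zero, Function.comp_def] using hsq.sqrt

-- The cross terms `u v' + u' v = (u v)'` integrate to zero.
lemma h1Inner_eq (hu : IsH1 u) (hv : IsH1 v) :
    h1Inner u v = ∫ x, (u x + deriv u x) * (v x + deriv v x) := by
  have hdiag : Integrable (fun x => u x * v x + deriv u x * deriv v x) :=
    (hu.memLp.integrable_mul hv.memLp).add (hu.memLp_deriv.integrable_mul hv.memLp_deriv)
  have hcross : Integrable (fun x => deriv u x * v x + u x * deriv v x) :=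
    (hu.memLp_deriv.integrable_mul hv.memLp).add (hu.memLp.integrable_mul hv.memLp_deriv)
  have hzero : ∫ x, (deriv u x * v x + u x * deriv v x) = 0 :=
    (hu.hasWeakDeriv_deriv.mul hv.hasWeakDeriv_deriv).integral_eq_zero
      (hu.memLp.integrable_mul hv.memLp) hcross
  calc h1Inner u v
    _ = (∫ x, (u x * v x + deriv u x * deriv v x))
        + ∫ x, (deriv u x * v x + u x * deriv v x) := by rw [h1Inner, hzero, add_zero]
    _ = ∫ x, (u x + deriv u x) * (v x + deriv v x) := by
      rw [← integral_add hdiag hcross]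
      congr with x
      ring

end IsH1

lemma inner_toLp_toLp_eq_integral_mul {α : Type*} [MeasurableSpace α] {μ : Measure α}
    {f g : α → ℝ} (hf : MemLp f 2 μ) (hg : MemLp g 2 μ) :
    inner ℝ (hf.toLp f) (hg.toLp g) = ∫ x, f x * g x ∂μ := by
  rw [L2.inner_def]
  refine integral_congr_ae ?_
  filter_upwards [hf.coeFn_toLp, hg.coeFn_toLp] with x hfx hgx
  rw [hfx, hgx, Real.inner_apply]

lemma exists_norm_le_of_forall_exists_norm_inner_le {𝕜 H ι : Type*} [RCLike 𝕜]
    [NormedAddCommGroup H] [InnerProductSpace 𝕜 H] [CompleteSpace H] {w : ι → H}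
    (h : ∀ f, ∃ C, ∀ i, ‖inner 𝕜 (w i) f‖ ≤ C) : ∃ C, ∀ i, ‖w i‖ ≤ C := by
  obtain ⟨C, hC⟩ := banach_steinhaus (g := fun i => innerSL 𝕜 (w i)) h
  exact ⟨C, fun i => innerSL_apply_norm 𝕜 (w i) ▸ hC i⟩

/-- The kernel `t ↦ 1_{t ≤ x} exp (t - x)` of the inverse of `v ↦ v + v'` on `L²(ℝ)`. -/
noncomputable def expKernel (x : ℝ) : ℝ → ℝ := (Set.Iic x).indicator fun t => exp (t - x)

/-- The solution of `v + v' = f` in `H¹(ℝ)`, for `f ∈ L²(ℝ)`. -/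
noncomputable def expSolution (f : ℝ → ℝ) (x : ℝ) : ℝ := ∫ t, expKernel x t * f t

lemma expKernel_mul_eq_indicator (f : ℝ → ℝ) (x : ℝ) :
    (fun t => expKernel x t * f t) =
      (Set.Iic x).indicator fun t => exp (-x) * (exp t * f t) := by
  ext t
  by_cases ht : t ∈ Set.Iic x
  · rw [expKernel, Set.indicator_of_mem ht, Set.indicator_of_mem ht, ← mul_assoc, ← exp_add,
      neg_add_eq_sub]
  · rw [expKernel, Set.indicator_of_notMem ht, Set.indicator_of_notMem ht, zero_mul]

lemma expKernel_sq (x : ℝ) :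
    (fun t => expKernel x t ^ 2) =
      (Set.Iic x).indicator fun t => exp (2 * t) * exp (-(2 * x)) := by
  ext t
  by_cases ht : t ∈ Set.Iic x
  · rw [expKernel, Set.indicator_of_mem ht, Set.indicator_of_mem ht, ← exp_nat_mul, ← exp_add]
    congr 1
    push_cast
    ring
  · rw [expKernel, Set.indicator_of_notMem ht, Set.indicator_of_notMem ht, zero_pow two_ne_zero]

lemma memLp_expKernel (x : ℝ) : MemLp (expKernel x) 2 := by
  have hmeas : Measurable (expKernel x) := Measurable.indicator (by fun_prop) measurableSet_Iic
  rw [memLp_two_iff_integrable_sq hmeas.aestronglyMeasurable, expKernel_sq,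
    integrable_indicator_iff measurableSet_Iic]
  exact (integrableOn_exp_mul_Iic two_pos x).mul_const _

lemma integral_expKernel_sq (x : ℝ) : ∫ t, expKernel x t ^ 2 = 1 / 2 := by
  rw [expKernel_sq, integral_indicator measurableSet_Iic, integral_mul_const,
    integral_exp_mul_Iic two_pos, div_mul_eq_mul_div, ← exp_add, add_neg_cancel, exp_zero]

lemma norm_toLp_expKernel_le_one (x : ℝ) : ‖(memLp_expKernel x).toLp (expKernel x)‖ ≤ 1 := by
  have hsq : ‖(memLp_expKernel x).toLp (expKernel x)‖ ^ 2 = 1 / 2 := by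
    rw [← real_inner_self_eq_norm_sq, inner_toLp_toLp_eq_integral_mul, ← integral_expKernel_sq x]
    simp only [sq]
  exact (sq_le_one_iff₀ (norm_nonneg _)).1 (hsq.trans_le one_half_lt_one.le)

section ExpSolution

variable {f : ℝ → ℝ}

lemma integrableOn_exp_mul_Iic_of_memLp_two (hf : MemLp f 2) (x : ℝ) :
    IntegrableOn (fun t => exp t * f t) (Set.Iic x) := by
  have hint : Integrable (fun t => expKernel x t * f t) := (memLp_expKernel x).integrable_mul hf
  rw [expKernel_mul_eq_indicator, integrable_indicator_iff measurableSet_Iic] at hint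
  exact (integrable_const_mul_iff (exp_ne_zero _).isUnit _).1 hint

lemma expSolution_eq_exp_neg_mul (f : ℝ → ℝ) (x : ℝ) :
    expSolution f x = exp (-x) * ∫ t in Set.Iic x, exp t * f t := by
  rw [expSolution, expKernel_mul_eq_indicator, integral_indicator measurableSet_Iic,
    integral_const_mul]

lemma abs_expSolution_le (hf : MemLp f 2) (x : ℝ) : |expSolution f x| ≤ ‖hf.toLp f‖ :=
  calc |expSolution f x|
    _ = |inner ℝ ((memLp_expKernel x).toLp (expKernel x)) (hf.toLp f)| := by
      rw [inner_toLp_toLp_eq_integral_mul, expSolution]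
    _ ≤ ‖(memLp_expKernel x).toLp (expKernel x)‖ * ‖hf.toLp f‖ := abs_real_inner_le_norm _ _
    _ ≤ ‖hf.toLp f‖ := mul_le_of_le_one_left (norm_nonneg _) (norm_toLp_expKernel_le_one x)

lemma hasWeakDeriv_expSolution (hf : MemLp f 2) :
    HasWeakDeriv (expSolution f) (fun x => f x - expSolution f x) := by
  have hexp : HasWeakDeriv (fun x => exp (-x)) (fun x => -exp (-x)) :=
    .of_hasDerivAt (fun x => by simpa only [mul_neg_one] using (hasDerivAt_neg x).exp)
      (by fun_prop)
  have hmul := hexp.mul (.setIntegral_Iic (integrableOn_exp_mul_Iic_of_memLp_two hf))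
  rw [funext (expSolution_eq_exp_neg_mul f)]
  convert hmul using 2 with x
  rw [← mul_assoc (exp (-x)), ← exp_add, neg_add_cancel, exp_zero]
  ring

lemma isH1_expSolution (hf : MemLp f 2) : IsH1 (expSolution f) := by
  have hmem : MemLp (expSolution f) 2 :=
    (hasWeakDeriv_expSolution hf).memLp_two_of_add (abs_expSolution_le hf)
      (by simpa only [add_sub_cancel] using hf)
  exact IsH1.iff_exists_hasWeakDeriv.2 ⟨hmem, _, hf.sub hmem, hasWeakDeriv_expSolution hf⟩

lemma expSolution_add_deriv_ae_eq (hf : MemLp f 2) :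
    (fun x => expSolution f x + deriv (expSolution f) x) =ᵐ[volume] f := by
  filter_upwards [(hasWeakDeriv_expSolution hf).deriv_ae_eq] with x hx
  rw [hx, add_sub_cancel]

lemma IsH1.expSolution_add_deriv {u : ℝ → ℝ} (hu : IsH1 u) :
    expSolution (fun x => u x + deriv u x) = u := by
  have hderiv : HasWeakDeriv (fun x => exp x * u x) (fun x => exp x * (u x + deriv u x)) := by
    simpa only [mul_add] using
      (HasWeakDeriv.of_hasDerivAt hasDerivAt_exp continuous_exp).mul hu.hasWeakDeriv_deriv
  have hlim : Tendsto (fun x => exp x * u x) atBot (𝓝 0) := by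
    simpa only [mul_zero] using tendsto_exp_atBot.mul hu.tendsto_atBot_zero
  ext x
  rw [expSolution_eq_exp_neg_mul, hderiv.setIntegral_Iic_eq hlim
    (integrableOn_exp_mul_Iic_of_memLp_two hu.memLp_add_deriv x), ← mul_assoc, ← exp_add,
    neg_add_cancel, exp_zero, one_mul]

end ExpSolution

namespace WeakH1Tendsto

variable {un : ℕ → ℝ → ℝ} {u : ℝ → ℝ}

lemma tendsto_integral_mul (hw : WeakH1Tendsto un u) {f : ℝ → ℝ} (hf : MemLp f 2) :
    Tendsto (fun n => ∫ x, f x * (un n x + deriv (un n) x)) atTop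
      (𝓝 (∫ x, f x * (u x + deriv u x))) := by
  obtain ⟨hun, hu, hinner⟩ := hw
  have h1Inner_expSolution {w : ℝ → ℝ} (hwH1 : IsH1 w) :
      h1Inner w (expSolution f) = ∫ x, f x * (w x + deriv w x) := by
    rw [hwH1.h1Inner_eq (isH1_expSolution hf)]
    refine integral_congr_ae ?_
    filter_upwards [expSolution_add_deriv_ae_eq hf] with x hx
    rw [hx, mul_comm]
  simpa only [h1Inner_expSolution hu, h1Inner_expSolution (hun _)] using
    hinner _ (isH1_expSolution hf)

lemma tendsto_apply (hw : WeakH1Tendsto un u) (x : ℝ) :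
    Tendsto (fun n => un n x) atTop (𝓝 (u x)) := by
  have hlim : Tendsto (fun n => expSolution (fun t => un n t + deriv (un n) t) x) atTop
      (𝓝 (expSolution (fun t => u t + deriv u t) x)) :=
    hw.tendsto_integral_mul (memLp_expKernel x)
  simpa only [(hw.1 _).expSolution_add_deriv, hw.2.1.expSolution_add_deriv] using hlim

lemma exists_forall_abs_le (hw : WeakH1Tendsto un u) : ∃ C, ∀ n x, |un n x| ≤ C := by
  obtain ⟨C, hC⟩ := exists_norm_le_of_forall_exists_norm_inner_le (𝕜 := ℝ)
    (w := fun n => (hw.1 n).memLp_add_deriv.toLp _) fun f => by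
      obtain ⟨C, hC⟩ := (Metric.isBounded_range_of_tendsto _
        (hw.tendsto_integral_mul (Lp.memLp f))).exists_norm_le
      refine ⟨C, fun n => ?_⟩
      have hn : ‖∫ x, f x * (un n x + deriv (un n) x)‖ ≤ C := hC _ ⟨n, rfl⟩
      rwa [← inner_toLp_toLp_eq_integral_mul (Lp.memLp f) (hw.1 n).memLp_add_deriv,
        Lp.toLp_coeFn, real_inner_comm] at hn
  refine ⟨C, fun n x => ?_⟩
  rw [← (hw.1 n).expSolution_add_deriv]
  exact (abs_expSolution_le (hw.1 n).memLp_add_deriv x).trans (hC n)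

lemma tendsto_integral_comp (hw : WeakH1Tendsto un u) {φ : ℝ → ℝ} (hφ : Continuous φ)
    (μ : Measure ℝ) [IsFiniteMeasure μ] :
    Tendsto (fun n => ∫ x, φ (un n x) ∂μ) atTop (𝓝 (∫ x, φ (u x) ∂μ)) := by
  obtain ⟨C, hC⟩ := hw.exists_forall_abs_le
  obtain ⟨M, hM⟩ :=
    isCompact_Icc.exists_bound_of_continuousOn (hφ.continuousOn (s := Set.Icc (-C) C))
  exact tendsto_integral_of_dominated_convergence (fun _ => M)
    (fun n => (hφ.comp (hw.1 n).continuous).aestronglyMeasurable) (integrable_const M)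
    (fun n => .of_forall fun x => hM _ (abs_le.1 (hC n x)))
    (.of_forall fun x => (hφ.tendsto _).comp (hw.tendsto_apply x))

end WeakH1Tendsto

theorem measure_term_continuous_general (V₁ : SignedMeasure ℝ) (un : ℕ → ℝ → ℝ) (u : ℝ → ℝ)
    (hw : WeakH1Tendsto un u) {φ : ℝ → ℝ} (hφ : Continuous φ) :
    Tendsto (fun n => sMeasInt V₁ (fun x => φ (un n x))) atTop
      (𝓝 (sMeasInt V₁ (fun x => φ (u x)))) :=
  (hw.tendsto_integral_comp hφ _).sub (hw.tendsto_integral_comp hφ _)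

/-- **Continuity of the measure term under weak `H¹` convergence.** For `V = V₀ + V₁` with
`V₀ ∈ L^∞(ℝ)`, `ess inf V₀ > 0`, and `V₁` a finite signed Radon measure: if `u_n → u`
weakly in `H¹(ℝ)`, then `∫_ℝ |u_n|² dV₁ → ∫_ℝ |u|² dV₁`. -/
theorem measure_term_continuous (V₀ : ℝ → ℝ) (hV₀ : MemLp V₀ ⊤ (volume : Measure ℝ))
    (hpos : 0 < essInf V₀ (volume : Measure ℝ)) (V₁ : SignedMeasure ℝ)
    (un : ℕ → ℝ → ℝ) (u : ℝ → ℝ) (hw : WeakH1Tendsto un u) :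
    Filter.Tendsto (fun n => sMeasInt V₁ (fun x => (un n x) ^ 2)) Filter.atTop
      (𝓝 (sMeasInt V₁ (fun x => (u x) ^ 2))) :=
  measure_term_continuous_general V₁ un u hw (continuous_pow 2)
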